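/- arXiv:0907.3409 — 5 statements merged into one kernel-verified Lean document; each statement's English description precedes it below -/
import Mathlib

section
/- (Arithmetic partition lemma.) For every dimension d ≥ 1 there exists a constant C₀ = C₀(d) with the following property: for every (large) number B ≥ 1 there is a partition {π_α} of ℤ^d such that diam π_α < B^{C₀} for every α, and such that whenever j ∈ π_α and j′ ∈ π_{α′} with α ≠ α′, one has |j − j′| + |j² − j′²| > B, where j² = |j|² = j·j. -/
open scoped BigOperators Pointwise
open MeasureTheory

noncomputable section

namespace NLS


/-- Euclidean distance on `ℤ^d`. -/
def eudistZ {d : ℕ} (x y : Fin d → ℤ) : ℝ :=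
  Real.sqrt (∑ i, ((x i : ℝ) - (y i : ℝ)) ^ 2)

section helpers
open Matrix


lemma coefId {g d : ℕ} (F : Matrix (Fin g) (Fin d) ℤ)
    (hli : LinearIndependent ℝ (fun s i => (F s i : ℝ))) (w q : Fin d → ℤ)
    (hw : (fun i => (w i : ℝ)) ∈ Submodule.span ℝ (Set.range (fun s i => (F s i : ℝ)))) :
    (F * Fᵀ).det ≠ 0 ∧
    (F * Fᵀ).det * (q ⬝ᵥ w) = ((F * Fᵀ).adjugate *ᵥ (F *ᵥ w)) ⬝ᵥ (F *ᵥ q) := by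
  set φ := Int.castRingHom ℝ with hφ
  set FR : Matrix (Fin g) (Fin d) ℝ := F.map φ with hFR
  have hG : (F * Fᵀ).map φ = FR * FRᵀ := by
    rw [Matrix.map_mul, Matrix.transpose_map]
  have hdet : (((F * Fᵀ).det : ℤ) : ℝ) = (FR * FRᵀ).det := by
    have := RingHom.map_det φ (F * Fᵀ)
    rw [← hG]; simpa using this
  have hpd : (FR * FRᴴ).PosDef := by
    apply Matrix.PosDef.mul_conjTranspose_self
    rw [Matrix.vecMul_injective_iff]
    exact hli
  have hpos : 0 < (FR * FRᵀ).det := by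
    have := hpd.det_pos
    rwa [Matrix.conjTranspose_eq_transpose_of_trivial] at this
  constructor
  · intro h
    rw [h] at hdet
    simp at hdet
    linarith
  · obtain ⟨c, hc⟩ := (Submodule.mem_span_range_iff_exists_fun ℝ).1 hw
    have hc' : c ᵥ* FR = φ ∘ w := by
      ext i
      have := congrFun hc i
      simp [Finset.sum_apply] at this
      simp [Matrix.vecMul, dotProduct, hFR, this]
    have h1 : (FR * FRᵀ).adjugate *ᵥ (FR *ᵥ (φ ∘ w)) = (FR * FRᵀ).det • c := by
      rw [← hc', ← Matrix.mulVec_transpose, Matrix.mulVec_mulVec, Matrix.mulVec_mulVec, Matrix.mul_assoc, Matrix.adjugate_mul, Matrix.smul_mulVec, Matrix.one_mulVec]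
    have h2 : (FR * FRᵀ).det * ((φ ∘ q) ⬝ᵥ (φ ∘ w)) =
        ((FR * FRᵀ).adjugate *ᵥ (FR *ᵥ (φ ∘ w))) ⬝ᵥ (FR *ᵥ (φ ∘ q)) := by
      rw [h1, ← hc', smul_dotProduct, smul_eq_mul, Matrix.dotProduct_mulVec, dotProduct_comm]
    apply (Int.cast_injective (α := ℝ))
    have e1 := RingHom.map_dotProduct φ q w
    have e2 := RingHom.map_dotProduct φ ((F * Fᵀ).adjugate *ᵥ (F *ᵥ w)) (F *ᵥ q)
    have e3 : φ ∘ (F *ᵥ q) = FR *ᵥ (φ ∘ q) := by ext i; exact RingHom.map_mulVec φ F q i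
    have e4 : φ ∘ (F *ᵥ w) = FR *ᵥ (φ ∘ w) := by ext i; exact RingHom.map_mulVec φ F w i
    have e5 : φ ∘ ((F * Fᵀ).adjugate *ᵥ (F *ᵥ w)) = (FR * FRᵀ).adjugate *ᵥ (FR *ᵥ (φ ∘ w)) := by
      rw [← e4, ← hG]
      have := RingHom.map_adjugate φ (F * Fᵀ)
      simp only [RingHom.mapMatrix_apply] at this
      rw [← this]
      ext i; exact RingHom.map_mulVec φ _ _ i
    rw [e3, e5, ← h2, ← e1, ← hdet] at e2
    rw [Int.cast_mul]
    exact e2.symm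

lemma dot_bound {n : ℕ} (x y : Fin n → ℤ) (X Y : ℤ) (hX : ∀ i, |x i| ≤ X) (hY : ∀ i, |y i| ≤ Y) :
    |x ⬝ᵥ y| ≤ n * X * Y := by
  unfold dotProduct
  calc |∑ i, x i * y i| ≤ ∑ i, |x i * y i| := Finset.abs_sum_le_sum_abs _ _
    _ ≤ ∑ i : Fin n, X * Y := by
        apply Finset.sum_le_sum
        intro i _
        rw [abs_mul]
        exact mul_le_mul (hX i) (hY i) (abs_nonneg _) ((abs_nonneg _).trans (hX i))
    _ = n * X * Y := by simp; ring

lemma coefBound {g d : ℕ} (hd : 1 ≤ d) (F : Matrix (Fin g) (Fin d) ℤ)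
    (hli : LinearIndependent ℝ (fun s i => (F s i : ℝ))) (w q : Fin d → ℤ)
    (hw : (fun i => (w i : ℝ)) ∈ Submodule.span ℝ (Set.range (fun s i => (F s i : ℝ))))
    (A Q W : ℤ) (hA1 : 1 ≤ A) (hA : ∀ s i, |F s i| ≤ A) (hQ : ∀ s, |q ⬝ᵥ F s| ≤ Q)
    (hW : ∀ i, |w i| ≤ W) :
    |q ⬝ᵥ w| ≤ g * (g * (g.factorial * (d * A * A) ^ g) * (d * A * W)) * Q := by
  obtain ⟨h0, h1⟩ := coefId F hli w q hw
  have hd' : (1:ℤ) ≤ d := by exact_mod_cast hd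
  have hX1 : 1 ≤ (d:ℤ) * A * A := by nlinarith [mul_le_mul hd' hA1 (by norm_num) (by linarith)]
  have hG : ∀ s t, |(F * Fᵀ) s t| ≤ d * A * A := fun s t =>
    dot_bound (F s) (F t) A A (hA s) (hA t)
  have hadj : ∀ s t, |(F * Fᵀ).adjugate s t| ≤ g.factorial * (d * A * A) ^ g := by
    intro s t
    rw [Matrix.adjugate_apply]
    have := Matrix.det_le (A := (F * Fᵀ).updateRow t (Pi.single s 1)) (abv := AbsoluteValue.abs)
      (x := (d * A * A : ℤ)) (by
        intro i j
        simp only [Matrix.updateRow_apply, AbsoluteValue.abs_apply]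
        split_ifs
        · by_cases h : j = s
          · subst h; simpa using hX1
          · simp [h]; positivity
        · exact hG i j)
    simpa using this
  have hb : ∀ t, |(F *ᵥ w) t| ≤ d * A * W := fun t => dot_bound (F t) w A W (hA t) hW
  have hab : ∀ s, |((F * Fᵀ).adjugate *ᵥ (F *ᵥ w)) s| ≤
      g * (g.factorial * (d * A * A) ^ g) * (d * A * W) := fun s =>
    dot_bound _ _ _ _ (hadj s) hb
  have hq : ∀ s, |(F *ᵥ q) s| ≤ Q := fun s => by
    have := hQ s
    rwa [dotProduct_comm] at this
  have := dot_bound _ _ _ _ hab hq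
  rw [← h1, abs_mul] at this
  have h2 : 1 ≤ |(F * Fᵀ).det| := Int.one_le_abs h0
  nlinarith [abs_nonneg (q ⬝ᵥ w)]

lemma chain_diff (f : ℕ → ℤ) (N : ℤ) (k : ℕ) (h : ∀ i < k, |f (i+1) - f i| ≤ N) (i m : ℕ)
    (him : i + m ≤ k) : |f (i+m) - f i| ≤ N * m := by
  induction m with
  | zero => simp
  | succ m ih =>
    have h1 := ih (by omega)
    have h2 := h (i+m) (by omega)
    have := abs_add_le (f (i+m+1) - f (i+m)) (f (i+m) - f i)
    rw [sub_add_sub_cancel] at this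
    rw [← add_assoc]; push_cast; linarith

lemma chain_diff' (f : ℕ → ℤ) (N : ℤ) (hN : 0 ≤ N) (k : ℕ) (h : ∀ i < k, |f (i+1) - f i| ≤ N)
    (i j : ℕ) (hi : i ≤ k) (hj : j ≤ k) : |f i - f j| ≤ N * k := by
  rcases le_total i j with hij | hij
  · obtain ⟨m, rfl⟩ := Nat.exists_eq_add_of_le hij
    rw [abs_sub_comm]
    refine (chain_diff f N k h i m hj).trans ?_
    gcongr; omega
  · obtain ⟨m, rfl⟩ := Nat.exists_eq_add_of_le hij
    refine (chain_diff f N k h j m hi).trans ?_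
    gcongr; omega

def castv {d : ℕ} (x : Fin d → ℤ) : Fin d → ℝ := fun i => (x i : ℝ)

lemma castv_sub {d : ℕ} (x y : Fin d → ℤ) : castv (x - y) = castv x - castv y := by
  ext i; simp [castv]

def VV {d : ℕ} (q : ℕ → Fin d → ℤ) (k : ℕ) : Submodule ℝ (Fin d → ℝ) :=
  Submodule.span ℝ ((fun i => castv (q i - q 0)) '' {i | i ≤ k})

def IsChain' {d : ℕ} (N : ℤ) (q : ℕ → Fin d → ℤ) (k : ℕ) : Prop :=
  (∀ i < k, ∀ l, |q (i+1) l - q i l| ≤ N) ∧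
  (∀ i < k, |q (i+1) ⬝ᵥ q (i+1) - q i ⬝ᵥ q i| ≤ N) ∧ Set.InjOn q {i | i ≤ k}

lemma IsChain'.sub {d : ℕ} {N : ℤ} {q : ℕ → Fin d → ℤ} {k : ℕ} (h : IsChain' N q k)
    (a L : ℕ) (haL : a + L ≤ k) : IsChain' N (fun i => q (a + i)) L := by
  obtain ⟨h1, h2, h3⟩ := h
  refine ⟨fun i hi => h1 (a+i) (by omega), fun i hi => h2 (a+i) (by omega), ?_⟩
  intro i hi j hj hij
  have := h3 (show a + i ∈ {i | i ≤ k} by simp at hi ⊢; omega)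
    (show a + j ∈ {i | i ≤ k} by simp at hj ⊢; omega) hij
  omega

lemma VV_sub_le {d : ℕ} (q : ℕ → Fin d → ℤ) (k a L : ℕ) (haL : a + L ≤ k) :
    VV (fun i => q (a + i)) L ≤ VV q k := by
  unfold VV
  rw [Submodule.span_le]
  rintro _ ⟨i, hi, rfl⟩
  have : q (a + i) - q (a + 0) = (q (a+i) - q 0) - (q a - q 0) := by simp
  simp only
  rw [this, castv_sub]
  simp at hi
  exact Submodule.sub_mem _ (Submodule.subset_span ⟨a+i, by simp; omega, rfl⟩)
    (Submodule.subset_span ⟨a, by simp; omega, rfl⟩)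

/-- all points of a chain of length `L` have small inner product with vectors of the span. -/
lemma windowBound {d : ℕ} (hd : 1 ≤ d) (N : ℤ) (hN : 1 ≤ N) (q : ℕ → Fin d → ℤ) (L : ℕ)
    (hL : 1 ≤ L) (hc : IsChain' N q L) (i : ℕ) (hi : i ≤ L) (g : ℕ)
    (hg : Module.finrank ℝ (VV q L) = g) (w : Fin d → ℤ) (hw : castv w ∈ VV q L) (W : ℤ)
    (hW : ∀ l, |w l| ≤ W) :
    |q i ⬝ᵥ w| ≤ (g * (g * (g.factorial * d ^ g) * d) * (2 * (d + 1)) : ℕ) *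
      (N * L) ^ (2 * g + 3) * W := by
  obtain ⟨h1, h2, -⟩ := hc
  set A : ℤ := N * L with hAdef
  have hL' : (1:ℤ) ≤ L := by exact_mod_cast hL
  have hA1 : 1 ≤ A := by nlinarith
  have hdiff : ∀ i j, i ≤ L → j ≤ L → ∀ l, |(q i - q j) l| ≤ A := fun i j hi hj l =>
    chain_diff' (fun i => q i l) N (by linarith) L (fun i hi => h1 i hi l) i j hi hj
  have hsq : ∀ i j, i ≤ L → j ≤ L → |q i ⬝ᵥ q i - q j ⬝ᵥ q j| ≤ A := fun i j hi hj =>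
    chain_diff' (fun i => q i ⬝ᵥ q i) N (by linarith) L h2 i j hi hj
  have hdot : ∀ j, j ≤ L → |q i ⬝ᵥ (q j - q i)| ≤ (d + 1) * A * A := by
    intro j hj
    have e : 2 * (q i ⬝ᵥ (q j - q i)) =
        (q j ⬝ᵥ q j - q i ⬝ᵥ q i) - (q j - q i) ⬝ᵥ (q j - q i) := by
      simp only [dotProduct_sub, sub_dotProduct, dotProduct_comm (q j) (q i)]; ring
    have b1 := hsq j i hj hi
    have b2 := dot_bound _ _ A A (hdiff j i hj hi) (hdiff j i hj hi)
    have b3 : A ≤ A * A := by nlinarith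
    have b4 : 0 ≤ (d:ℤ) * A * A := by positivity
    rw [abs_le] at *
    constructor <;> nlinarith
  unfold VV at hg hw
  have hex := Submodule.exists_fun_fin_finrank_span_eq ℝ
    ((fun i => castv (q i - q 0)) '' {i | i ≤ L})
  rw [hg] at hex
  obtain ⟨f, hf1, hf2, hf3⟩ := hex
  choose p hp1 hp2 using hf1
  have hfe : f = fun s => castv (q (p s) - q 0) := by ext1 s; exact (hp2 s).symm
  subst hfe
  rw [← hf2] at hw
  have key := coefBound hd (fun s => q (p s) - q 0) hf3 w (q i) hw A (2 * ((d+1) * A * A)) W hA1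
    (fun s => hdiff _ _ (hp1 s) (Nat.zero_le _))
    (fun s => by
      have e : q (p s) - q 0 = (q (p s) - q i) - (q 0 - q i) := by simp
      rw [e, dotProduct_sub]
      have b1 := hdot (p s) (hp1 s)
      have b2 := hdot 0 (Nat.zero_le _)
      have := abs_sub (q i ⬝ᵥ (q (p s) - q i)) (q i ⬝ᵥ (q 0 - q i))
      linarith) hW
  refine key.trans (le_of_eq ?_)
  push_cast
  rw [show (d:ℤ) * A * A = d * A^2 by ring, mul_pow, ← pow_mul]
  ring

lemma count_box {d : ℕ} (q : ℕ → Fin d → ℤ) (k R : ℕ) (hinj : Set.InjOn q {i | i ≤ k})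
    (h : ∀ i ≤ k, ∀ l, |(q i - q 0) l| ≤ R) : k + 1 ≤ (2 * R + 1) ^ d := by
  have := Finset.card_le_card_of_injOn (s := Finset.range (k+1))
    (t := Fintype.piFinset (fun _ : Fin d => Finset.Icc (-(R:ℤ)) R)) (fun i => q i - q 0)
    (by
      intro i hi
      simp only [Finset.coe_range, Set.mem_Iio] at hi
      simp only [Finset.mem_coe, Fintype.mem_piFinset, Finset.mem_Icc]
      intro l
      exact abs_le.1 (h i (by omega) l))
    (by
      intro i hi j hj hij
      simp only [Finset.coe_range, Set.mem_Iio] at hi hj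
      exact hinj (show i ≤ k by omega) (show j ≤ k by omega) (sub_left_injective hij))
  simp only [Finset.card_range, Fintype.card_piFinset, Int.card_Icc, Finset.prod_const,
    Finset.card_univ, Fintype.card_fin] at this
  refine this.trans (le_of_eq ?_)
  congr 1
  omega

lemma sup_bound {d : ℕ} (w x y : Fin d → ℤ) (M : ℤ) (hM : 0 ≤ M) (hwxy : w = x - y)
    (hx : ∀ W, (∀ l, |w l| ≤ W) → |x ⬝ᵥ w| ≤ M * W)
    (hy : ∀ W, (∀ l, |w l| ≤ W) → |y ⬝ᵥ w| ≤ M * W) (l : Fin d) : |w l| ≤ 2 * M := by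
  obtain ⟨m, -, hm⟩ := Finset.exists_max_image Finset.univ (fun l => |w l|) ⟨l, Finset.mem_univ l⟩
  have hW : ∀ l, |w l| ≤ |w m| := fun l => hm l (Finset.mem_univ _)
  refine (hW l).trans ?_
  have h1 := hx _ hW
  have h2 := hy _ hW
  have h3 : |w m| * |w m| ≤ w ⬝ᵥ w := by
    rw [abs_mul_abs_self]
    exact Finset.single_le_sum (f := fun i => w i * w i) (fun i _ => mul_self_nonneg _)
      (Finset.mem_univ m)
  have h4 : w ⬝ᵥ w = x ⬝ᵥ w - y ⬝ᵥ w := by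
    conv_lhs => rw [hwxy]
    rw [sub_dotProduct, ← hwxy]
  by_contra hcon
  push Not at hcon
  have := abs_le.1 h1
  have := abs_le.1 h2
  nlinarith

lemma chain_main {d : ℕ} (hd : 1 ≤ d) (g : ℕ) : ∃ c e : ℕ, ∀ N : ℕ, 1 ≤ N →
    ∀ (q : ℕ → Fin d → ℤ) (k : ℕ), IsChain' N q k → Module.finrank ℝ (VV q k) ≤ g →
      k ≤ c * N ^ e := by
  induction g with
  | zero =>
    refine ⟨0, 0, fun N hN q k hc hg => ?_⟩
    have h0 : VV q k = ⊥ := by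
      rw [← Submodule.finrank_eq_zero (R := ℝ)]; omega
    have h1 : castv (q k - q 0) ∈ VV q k := Submodule.subset_span ⟨k, le_refl k, rfl⟩
    rw [h0, Submodule.mem_bot] at h1
    have h2 : q k = q 0 := by
      ext l
      have := congrFun h1 l
      simp only [castv, Pi.zero_apply, Int.cast_eq_zero, Pi.sub_apply] at this
      omega
    have := hc.2.2 (show k ≤ k from le_refl k) (show 0 ≤ k from Nat.zero_le k) h2
    omega
  | succ g ih =>
    obtain ⟨c, e, ih⟩ := ih
    set K : ℕ := (g+1) * ((g+1) * ((g+1).factorial * d ^ (g+1)) * d) * (2 * (d + 1)) with hK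
    set E : ℕ := 2 * (g+1) + 3 with hE
    refine ⟨(c+1) + (5 * (K * (c+1) ^ E)) ^ d, e + (e+1) * E * d, fun N hN q k hc hg => ?_⟩
    have hNe : 1 ≤ N ^ e := Nat.one_le_pow _ _ hN
    set L := (c+1) * N ^ e with hL
    have hLgt : c * N ^ e < L := by rw [hL]; nlinarith
    have hL1 : 1 ≤ L := by omega
    by_cases hkL : k < L
    · calc k ≤ (c+1) * N ^ e := hkL.le
        _ ≤ _ := by
          exact Nat.mul_le_mul (Nat.le_add_right _ _) (Nat.pow_le_pow_right hN (Nat.le_add_right _ _))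
    push Not at hkL
    have hKpos : 1 ≤ K := by
      have : 0 < K := by
        rw [hK]; have := Nat.factorial_pos (g+1); positivity
      omega
    set M : ℕ := K * (N * L) ^ E with hM
    have hM1 : 1 ≤ M := by
      have : 0 < M := by rw [hM]; positivity
      omega
    have hwin : ∀ i ≤ k, ∀ w, castv w ∈ VV q k → ∀ W, (∀ l, |w l| ≤ W) →
        |q i ⬝ᵥ w| ≤ (M:ℤ) * W := by
      intro i hi w hw W hW
      obtain ⟨a, j, haL, hj, rfl⟩ : ∃ a j, a + L ≤ k ∧ j ≤ L ∧ i = a + j := by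
        rcases le_total i (k - L) with h | h
        · exact ⟨i, 0, by omega, by omega, by omega⟩
        · exact ⟨k - L, i - (k - L), by omega, by omega, by omega⟩
      have hc' := hc.sub a L haL
      have hle := VV_sub_le q k a L haL
      have hr : g + 1 ≤ Module.finrank ℝ (VV (fun i => q (a + i)) L) := by
        by_contra hcon
        have := ih N hN _ L hc' (by omega)
        omega
      have heq := Submodule.eq_of_le_of_finrank_le hle (by omega)
      have hr' : Module.finrank ℝ (VV (fun i => q (a + i)) L) = g + 1 := by
        rw [heq] at hr ⊢; omega
      have := windowBound hd N (by exact_mod_cast hN) _ L hL1 hc' j hj (g+1) hr' w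
        (by rw [heq]; exact hw) W hW
      rw [hM]
      push_cast at this ⊢
      exact this
    have hbox : ∀ i ≤ k, ∀ l, |(q i - q 0) l| ≤ ((2 * M : ℕ) : ℤ) := by
      intro i hi l
      have hw : castv (q i - q 0) ∈ VV q k := Submodule.subset_span ⟨i, hi, rfl⟩
      push_cast
      exact sup_bound _ (q i) (q 0) M (by positivity) rfl (hwin i hi _ hw)
        (hwin 0 (Nat.zero_le _) _ hw) l
    have hcount := count_box q k (2 * M) hc.2.2 hbox
    calc k ≤ (2 * (2 * M) + 1) ^ d := by omega
      _ ≤ (5 * M) ^ d := by gcongr; omega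
      _ = (5 * (K * (c+1) ^ E)) ^ d * N ^ ((e+1) * E * d) := by
        rw [hM, hL, pow_mul, ← mul_pow, pow_mul, pow_succ, mul_assoc 5, mul_assoc K, ← mul_pow]
        ring
      _ ≤ _ := by
        exact Nat.mul_le_mul (Nat.le_add_left _ _) (Nat.pow_le_pow_right hN (Nat.le_add_left _ _))

lemma eud_symm {d : ℕ} (x y : Fin d → ℤ) : eudistZ x y = eudistZ y x := by
  unfold eudistZ; congr 1; apply Finset.sum_congr rfl; intro i _; ring

lemma abs_le_eud {d : ℕ} (x y : Fin d → ℤ) (l : Fin d) : |(x l : ℝ) - y l| ≤ eudistZ x y := by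
  unfold eudistZ
  apply Real.abs_le_sqrt
  exact Finset.single_le_sum (f := fun i => ((x i : ℝ) - y i)^2) (fun i _ => sq_nonneg _)
    (Finset.mem_univ l)

lemma eud_le {d : ℕ} (hd : 1 ≤ d) (x y : Fin d → ℤ) (S : ℝ) (hS : 0 ≤ S)
    (h : ∀ l, |(x l : ℝ) - y l| ≤ S) : eudistZ x y ≤ d * S := by
  unfold eudistZ
  rw [Real.sqrt_le_iff]
  refine ⟨by positivity, ?_⟩
  have hd' : (1:ℝ) ≤ d := by exact_mod_cast hd
  calc ∑ i, ((x i : ℝ) - y i)^2 ≤ ∑ i : Fin d, S^2 :=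
        Finset.sum_le_sum fun i _ => sq_le_sq' (by linarith [(abs_le.1 (h i)).1]) (abs_le.1 (h i)).2
    _ = d * S^2 := by simp
    _ ≤ (d * S)^2 := by
        rw [mul_pow]
        exact mul_le_mul_of_nonneg_right (by nlinarith) (sq_nonneg S)

def GG {d : ℕ} (B : ℝ) : SimpleGraph (Fin d → ℤ) where
  Adj x y := x ≠ y ∧
    eudistZ x y + |((∑ i, x i ^ 2 : ℤ) : ℝ) - ((∑ i, y i ^ 2 : ℤ) : ℝ)| ≤ B
  symm := ⟨fun x y h => ⟨h.1.symm, by rw [eud_symm, abs_sub_comm]; exact h.2⟩⟩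
  loopless := ⟨fun x h => h.1 rfl⟩

lemma GG_small {d : ℕ} (B : ℝ) (hB0 : 1 ≤ B) (hB : B ^ 2 < 2) (x y : Fin d → ℤ) :
    ¬ (GG B).Adj x y := by
  rintro ⟨hne, h⟩
  have hpos := abs_nonneg (((∑ i, x i ^ 2 : ℤ) : ℝ) - ((∑ i, y i ^ 2 : ℤ) : ℝ))
  have hsq : eudistZ x y ^ 2 = ((∑ i, (x i - y i) ^ 2 : ℤ) : ℝ) := by
    unfold eudistZ
    rw [Real.sq_sqrt (Finset.sum_nonneg fun i _ => sq_nonneg _)]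
    push_cast; rfl
  have hE0 : 0 ≤ eudistZ x y := Real.sqrt_nonneg _
  have h1 : eudistZ x y ^ 2 < 2 := by nlinarith
  rw [hsq] at h1
  have h2 : (∑ i, (x i - y i) ^ 2 : ℤ) < 2 := by exact_mod_cast h1
  obtain ⟨l, hl⟩ := Function.ne_iff.1 hne
  have h3 : 1 ≤ (∑ i, (x i - y i) ^ 2 : ℤ) := by
    have a1 := Finset.single_le_sum (f := fun i => (x i - y i)^2) (fun i _ => sq_nonneg _)
      (Finset.mem_univ l)
    have a2 : 0 < (x l - y l)^2 := by
      have : x l - y l ≠ 0 := sub_ne_zero.2 hl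
      positivity
    linarith
  have h4 : (∑ i, (x i - y i) ^ 2 : ℤ) = 1 := by omega
  rw [h4] at hsq
  have h5 : eudistZ x y = 1 := by
    have : eudistZ x y ^ 2 = 1 := by simpa using hsq
    nlinarith
  have h6 : (∑ i, x i ^ 2 : ℤ) - (∑ i, y i ^ 2 : ℤ) =
      (∑ i, (x i - y i) ^ 2 : ℤ) + 2 * ∑ i, (x i - y i) * y i := by
    rw [Finset.mul_sum, ← Finset.sum_sub_distrib, ← Finset.sum_add_distrib]
    apply Finset.sum_congr rfl; intro i _; ring
  have h7 : (1:ℤ) ≤ |(∑ i, x i ^ 2 : ℤ) - (∑ i, y i ^ 2 : ℤ)| := by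
    apply Int.one_le_abs; omega
  have h8 : (1:ℝ) ≤ |((∑ i, x i ^ 2 : ℤ) : ℝ) - ((∑ i, y i ^ 2 : ℤ) : ℝ)| := by exact_mod_cast h7
  nlinarith

lemma le_floor_cast (B : ℝ) (hB : 0 ≤ B) (z : ℤ) (h : |(z : ℝ)| ≤ B) : |z| ≤ (⌊B⌋₊ : ℤ) := by
  rw [Int.abs_eq_natAbs]
  have : z.natAbs ≤ ⌊B⌋₊ := by
    apply Nat.le_floor
    rw [Nat.cast_natAbs]; push_cast; exact h
  exact_mod_cast this

lemma reach_bound {d : ℕ} (hd : 1 ≤ d) : ∃ c e : ℕ, ∀ B : ℝ, 1 ≤ B → ∀ x y : Fin d → ℤ,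
    (GG B).Reachable x y → eudistZ x y ≤ d * c * B ^ (e + 1) := by
  classical
  obtain ⟨c, e, H⟩ := chain_main hd d
  refine ⟨c, e, fun B hB x y hxy => ?_⟩
  obtain ⟨p, hp⟩ := hxy.exists_isPath
  have hB0 : 0 ≤ B := by linarith
  set N := ⌊B⌋₊ with hN
  have hN1 : 1 ≤ N := Nat.le_floor (by simpa using hB)
  have hNB : (N:ℝ) ≤ B := Nat.floor_le hB0
  have hc : IsChain' N p.getVert p.length := by
    refine ⟨fun i hi l => ?_, fun i hi => ?_, hp.getVert_injOn⟩
    · have ha := (p.adj_getVert_succ hi).2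
      apply le_floor_cast B hB0
      have h1 := abs_le_eud (p.getVert i) (p.getVert (i+1)) l
      rw [abs_sub_comm] at h1
      push_cast
      linarith [abs_nonneg (((∑ j, p.getVert i j ^ 2 : ℤ) : ℝ) -
        ((∑ j, p.getVert (i+1) j ^ 2 : ℤ) : ℝ))]
    · have ha := (p.adj_getVert_succ hi).2
      apply le_floor_cast B hB0
      have h1 : 0 ≤ eudistZ (p.getVert i) (p.getVert (i+1)) := Real.sqrt_nonneg _
      have e1 : ∀ v : Fin d → ℤ, v ⬝ᵥ v = ∑ j, v j ^ 2 := fun v => by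
        simp [dotProduct, sq]
      rw [e1, e1, Int.cast_sub, abs_sub_comm]
      linarith
  have hk := H N hN1 p.getVert p.length hc
    ((Submodule.finrank_le _).trans (by simp))
  have hS : ∀ l, |(x l : ℝ) - y l| ≤ B * (c * B ^ e) := by
    intro l
    have h1 := chain_diff' (fun i => p.getVert i l) N (by positivity) p.length
      (fun i hi => hc.1 i hi l) 0 p.length (Nat.zero_le _) le_rfl
    simp only [SimpleGraph.Walk.getVert_zero, SimpleGraph.Walk.getVert_length] at h1
    have h2 : |(x l : ℝ) - y l| ≤ N * p.length := by exact_mod_cast h1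
    have h3 : (p.length : ℝ) ≤ c * (N:ℝ) ^ e := by exact_mod_cast hk
    calc |(x l : ℝ) - y l| ≤ N * p.length := h2
      _ ≤ N * (c * (N:ℝ) ^ e) := by gcongr
      _ ≤ _ := by gcongr
  refine (eud_le hd x y _ (by positivity) hS).trans (le_of_eq (by ring))

end helpers

/-- Lemma 2.2 (arithmetic partition lemma): for every `B` there is a partition `{π_α}` of
`ℤ^d` into pieces of diameter `< B^{C₀}` such that `|j - j'| + |j² - j'²| > B` whenever
`j`, `j'` lie in different pieces. -/
theorem statement4 (d : ℕ) (hd : 1 ≤ d) :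
    ∃ C₀ : ℝ, 0 < C₀ ∧ ∀ B : ℝ, 1 ≤ B →
      ∃ PP : Set (Set (Fin d → ℤ)),
        (∀ π ∈ PP, π.Nonempty) ∧
        (∀ π ∈ PP, ∀ π' ∈ PP, π ≠ π' → π ∩ π' = ∅) ∧
        ⋃₀ PP = Set.univ ∧
        (∀ π ∈ PP, ∀ x ∈ π, ∀ y ∈ π, eudistZ x y < B ^ C₀) ∧
        (∀ π ∈ PP, ∀ π' ∈ PP, π ≠ π' → ∀ x ∈ π, ∀ y ∈ π',
          B < eudistZ x y + |((∑ i, x i ^ 2 : ℤ) : ℝ) - ((∑ i, y i ^ 2 : ℤ) : ℝ)|) := by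
  obtain ⟨c, e, H⟩ := reach_bound hd
  set n := d * c + 1 with hn
  refine ⟨((2 * n + (e + 1) : ℕ) : ℝ), by positivity, fun B hB => ?_⟩
  refine ⟨Set.range (fun C : (GG (d := d) B).ConnectedComponent => C.supp), ?_, ?_, ?_, ?_, ?_⟩
  · rintro _ ⟨C, rfl⟩
    exact C.nonempty_supp
  · rintro _ ⟨C, rfl⟩ _ ⟨C', rfl⟩ hne
    ext v
    simp only [Set.mem_inter_iff, SimpleGraph.ConnectedComponent.mem_supp_iff,
      Set.mem_empty_iff_false, iff_false, not_and]
    intro h1 h2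
    exact hne (by rw [← h1, ← h2])
  · ext v
    simp only [Set.mem_univ, iff_true]
    exact ⟨_, ⟨(GG B).connectedComponentMk v, rfl⟩, rfl⟩
  · rintro _ ⟨C, rfl⟩ x hx y hy
    have hr : (GG B).Reachable x y := by
      simp only [SimpleGraph.ConnectedComponent.mem_supp_iff] at hx hy
      exact SimpleGraph.ConnectedComponent.exact (hx.trans hy.symm)
    rw [Real.rpow_natCast]
    by_cases hB2 : B ^ 2 < 2
    · have hxy : x = y := by
        obtain ⟨p⟩ := hr
        cases p with
        | nil => rfl
        | cons h _ => exact absurd h (GG_small B hB hB2 _ _)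
      subst hxy
      have : eudistZ x x = 0 := by simp [eudistZ]
      rw [this]; positivity
    · push Not at hB2
      refine (H B hB x y hr).trans_lt ?_
      rw [pow_add B (2 * n) (e + 1), pow_mul]
      have h1 : (n : ℝ) < 2 ^ n := by exact_mod_cast Nat.lt_two_pow_self
      have h2 : (2:ℝ) ^ n ≤ (B ^ 2) ^ n := by gcongr
      have h3 : (n : ℝ) = d * c + 1 := by rw [hn]; push_cast; ring
      have h4 : 0 < B ^ (e + 1) := by positivity
      apply mul_lt_mul_of_pos_right _ h4
      linarith
  · rintro _ ⟨C, rfl⟩ _ ⟨C', rfl⟩ hne x hx y hy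
    by_contra hcon
    push Not at hcon
    simp only [SimpleGraph.ConnectedComponent.mem_supp_iff] at hx hy
    apply hne
    have : (GG B).connectedComponentMk x = (GG B).connectedComponentMk y := by
      by_cases hxy : x = y
      · rw [hxy]
      · exact SimpleGraph.ConnectedComponent.sound
          (SimpleGraph.Adj.reachable (show (GG B).Adj x y from ⟨hxy, hcon⟩))
    rw [← hx, ← hy, this]

end NLS
end
end

section
/- For every d ≥ 1 there exist pairwise distinct nonzero vectors j_1, …, j_{d+2} ∈ ℤ^d such that the (d+2)×(d+2) matrix M — whose first row is (1, …, 1), whose rows 2 through d+1 are the coordinate rows (j_1(i), …, j_{d+2}(i)) for i = 1, …, d, and whose last row is (j_1², …, j_{d+2}²) — has det M ≠ 0. -/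
open scoped BigOperators Pointwise
open MeasureTheory

noncomputable section

namespace NLS


/-- The `(d+2) × (d+2)` matrix with first row `(1,…,1)`, rows `2,…,d+1` the coordinate
rows of `j₁,…,j_{d+2}`, and last row the squared norms `(j₁²,…,j_{d+2}²)`. -/
def Mmat (d : ℕ) (j : Fin (d + 2) → Fin d → ℤ) : Matrix (Fin (d + 2)) (Fin (d + 2)) ℤ :=
  Matrix.of fun r c =>
    if h0 : (r : ℕ) = 0 then 1
    else if hd : (r : ℕ) ≤ d then j c ⟨(r : ℕ) - 1, by omega⟩
    else ∑ i, j c i ^ 2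

/-- expansion of a left product with `Mmat` -/
lemma vecMul_Mmat (d : ℕ) (j : Fin (d + 2) → Fin d → ℤ) (v : Fin (d + 2) → ℤ) (c : Fin (d + 2)) :
    Matrix.vecMul v (Mmat d j) c = v 0 + ∑ i : Fin d, v i.castSucc.succ * j c i
      + v (Fin.last (d + 1)) * ∑ i, j c i ^ 2 := by
  simp only [Matrix.vecMul, dotProduct]
  rw [Fin.sum_univ_succ, Fin.sum_univ_castSucc, ← add_assoc]
  congr 1
  · congr 1
    · simp [Mmat]
    · refine Finset.sum_congr rfl fun i _ => ?_
      have : (i : ℕ) + 1 ≤ d := i.2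
      simp [Mmat, this]
  · simp [Mmat]

lemma vecMul_single (d : ℕ) (j : Fin (d + 2) → Fin d → ℤ) (v : Fin (d + 2) → ℤ) (c : Fin (d + 2))
    (k : Fin d) (t : ℤ) (h : j c = Pi.single k t) :
    Matrix.vecMul v (Mmat d j) c = v 0 + v k.castSucc.succ * t + v (Fin.last (d + 1)) * t ^ 2 := by
  rw [vecMul_Mmat, h]
  congr 1
  · simp [Pi.single_apply]
  · simp [Pi.single_apply, ite_pow]

/-- For every `d ≥ 1` there are pairwise distinct nonzero `j₁,…,j_{d+2} ∈ ℤ^d` with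
`det M ≠ 0`. -/
theorem statement11 (d : ℕ) (hd : 1 ≤ d) :
    ∃ j : Fin (d + 2) → Fin d → ℤ,
      Function.Injective j ∧ (∀ k, j k ≠ 0) ∧ (Mmat d j).det ≠ 0 := by
  let z : Fin d := ⟨0, hd⟩
  let j : Fin (d + 2) → Fin d → ℤ := fun c =>
    if h : (c : ℕ) < d then Pi.single ⟨c, h⟩ 1
    else if (c : ℕ) = d then Pi.single z (-1) else Pi.single z 2
  have hdet : (Mmat d j).det ≠ 0 := by
    intro h0
    obtain ⟨v, hv, hM⟩ := Matrix.exists_vecMul_eq_zero_iff.mpr h0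
    have h1 : ∀ k : Fin d, v 0 + v k.castSucc.succ * 1 + v (Fin.last (d + 1)) * 1 ^ 2 = 0 := by
      intro k
      rw [← vecMul_single d j v k.castSucc.castSucc k 1 (by simp [j]), hM]
      rfl
    have h2 : v 0 + v z.castSucc.succ * (-1) + v (Fin.last (d + 1)) * (-1) ^ 2 = 0 := by
      rw [← vecMul_single d j v (Fin.last d).castSucc z (-1) (by simp [j]), hM]
      rfl
    have h3 : v 0 + v z.castSucc.succ * 2 + v (Fin.last (d + 1)) * 2 ^ 2 = 0 := by
      rw [← vecMul_single d j v (Fin.last (d + 1)) z 2 (by simp [j]), hM]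
      rfl
    have h1z := h1 z
    apply hv
    funext r
    refine Fin.cases ?_ (fun r => ?_) r
    · simp only [Pi.zero_apply]; linarith
    · refine Fin.lastCases ?_ (fun k => ?_) r
      · simp only [Pi.zero_apply, Fin.succ_last]; linarith
      · have := h1 k
        simp only [Pi.zero_apply]; linarith
  refine ⟨j, ?_, ?_, hdet⟩
  · intro a b hab
    by_contra hne
    refine hdet (Matrix.det_zero_of_column_eq hne fun r => ?_)
    simp [Mmat, hab]
  · intro k
    simp only [j]
    split_ifs <;> simp

end NLS
end
end

section
/- (Resonance identity, case (a).) Let j_1, …, j_b ∈ ℤ^d and ω⁰ = (j_1², …, j_b²) ∈ ℤ^b. Suppose (n, j), (n′, j′) ∈ ℤ^b × ℤ^d satisfy n·ω⁰ + j² = 0 and n′·ω⁰ + j′² = 0, and that for some k, k′ ∈ {1, …, b} one has n − n′ = −e_k + e_{k′} and j − j′ = j_k − j_{k′}. Then (j_k − j)·(j_k − j_{k′}) = 0. -/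
open scoped BigOperators Pointwise
open MeasureTheory

noncomputable section

namespace NLS


/-- Resonance identity (5.1), case (a): connectivity via the symbol `|u⁰|²`. -/
theorem statement12 (b d : ℕ) (j : Fin b → Fin d → ℤ) (n n' : Fin b → ℤ)
    (jv jv' : Fin d → ℤ) (k k' : Fin b)
    (h1 : (∑ m, n m * ∑ i, j m i ^ 2) + ∑ i, jv i ^ 2 = 0)
    (h2 : (∑ m, n' m * ∑ i, j m i ^ 2) + ∑ i, jv' i ^ 2 = 0)
    (hn : n - n' = -Pi.single k 1 + Pi.single k' 1)
    (hj : jv - jv' = j k - j k') :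
    ∑ i, (j k i - jv i) * (j k i - j k' i) = 0 := by
  have hd : (∑ m, (n m - n' m) * ∑ i, j m i ^ 2) = -(∑ i, j k i ^ 2) + ∑ i, j k' i ^ 2 := by
    have : ∀ m, n m - n' m = -(Pi.single k 1 : Fin b → ℤ) m + (Pi.single k' 1 : Fin b → ℤ) m :=
      fun m => congrFun hn m
    simp only [this, add_mul, neg_mul, Finset.sum_add_distrib, Finset.sum_neg_distrib]
    simp [Pi.single_apply]
  simp only [sub_mul, Finset.sum_sub_distrib] at hd
  have key : 2 * ∑ i, (j k i - jv i) * (j k i - j k' i)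
      = ∑ i, j k i ^ 2 - ∑ i, j k' i ^ 2 - ∑ i, jv i ^ 2 + ∑ i, jv' i ^ 2 := by
    rw [Finset.mul_sum, ← Finset.sum_sub_distrib, ← Finset.sum_sub_distrib,
      ← Finset.sum_add_distrib]
    refine Finset.sum_congr rfl fun i _ => ?_
    have h : jv i - jv' i = j k i - j k' i := congrFun hj i
    have h' : jv' i = jv i - j k i + j k' i := by linarith
    rw [h']; ring
  linarith

end NLS
end
end

section
/- (Resonance identity, case (b).) Let j_1, …, j_b ∈ ℤ^d and ω⁰ = (j_1², …, j_b²) ∈ ℤ^b. Suppose (n, j), (n′, j′) ∈ ℤ^b × ℤ^d satisfy n·ω⁰ + j² = 0 and −n′·ω⁰ + j′² = 0, and that for some κ, κ′ ∈ {1, …, b} one has n′ − n = e_κ + e_{κ′} and j′ − j = −(j_κ + j_{κ′}). Then (j − j_κ)·(j − j_{κ′}) = 0. -/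
open scoped BigOperators Pointwise
open MeasureTheory

noncomputable section

namespace NLS


/-- Resonance identity (5.2), case (b): connectivity via the symbol `(conj u⁰)²`. -/
theorem statement13 (b d : ℕ) (j : Fin b → Fin d → ℤ) (n n' : Fin b → ℤ)
    (jv jv' : Fin d → ℤ) (κ κ' : Fin b)
    (h1 : (∑ m, n m * ∑ i, j m i ^ 2) + ∑ i, jv i ^ 2 = 0)
    (h2 : -(∑ m, n' m * ∑ i, j m i ^ 2) + ∑ i, jv' i ^ 2 = 0)
    (hn : n' - n = Pi.single κ 1 + Pi.single κ' 1)
    (hj : jv' - jv = -(j κ + j κ')) :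
    ∑ i, (jv i - j κ i) * (jv i - j κ' i) = 0 := by
  have e1 : n' = fun m => n m + ((Pi.single κ 1 : Fin b → ℤ) m + (Pi.single κ' 1 : Fin b → ℤ) m) := by
    funext m
    have := congrFun hn m
    simp only [Pi.sub_apply, Pi.add_apply] at this
    linarith
  have e2 : ∀ i, jv' i = jv i - j κ i - j κ' i := by
    intro i
    have := congrFun hj i
    simp only [Pi.sub_apply, Pi.add_apply, Pi.neg_apply] at this
    linarith
  have e3 : ∑ m, n' m * ∑ i, j m i ^ 2
      = (∑ m, n m * ∑ i, j m i ^ 2) + (∑ i, j κ i ^ 2 + ∑ i, j κ' i ^ 2) := by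
    rw [e1]
    simp only [add_mul, Finset.sum_add_distrib, Pi.single_apply, ite_mul, one_mul, zero_mul,
      Finset.sum_ite_eq', Finset.sum_ite_eq, Finset.mem_univ, if_true]
  have e4 : 2 * ∑ i, (jv i - j κ i) * (jv i - j κ' i)
      = ∑ i, jv i ^ 2 + ∑ i, jv' i ^ 2 - (∑ i, j κ i ^ 2 + ∑ i, j κ' i ^ 2) := by
    rw [Finset.mul_sum, ← Finset.sum_add_distrib, ← Finset.sum_add_distrib,
      ← Finset.sum_sub_distrib]
    refine Finset.sum_congr rfl fun i _ => ?_
    rw [e2 i]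
    ring
  linarith

end NLS
end
end

section
/- (1d cubic resonances are confined to the initial frequencies.) Let d = 1, let j_1, …, j_b be pairwise distinct nonzero integers, and let ω⁰ = (j_1², …, j_b²) ∈ ℤ^b. Suppose (n, j), (n′, j′) ∈ ℤ^b × ℤ satisfy one of the following: (a⁺) n·ω⁰ + j² = 0, n′·ω⁰ + j′² = 0, and (n − n′, j − j′) = (−e_k + e_{k′}, j_k − j_{k′}) for some k, k′ with j_k ≠ j_{k′}; (a⁻) −n·ω⁰ + j² = 0, −n′·ω⁰ + j′² = 0, and (n − n′, j − j′) = (−e_k + e_{k′}, j_k − j_{k′}) for some k, k′ with j_k ≠ j_{k′}; (b) n·ω⁰ + j² = 0, −n′·ω⁰ + j′² = 0, and (n′ − n, j′ − j) = (e_κ + e_{κ′}, −(j_κ + j_{κ′})) for some κ, κ′. Then j ∈ {j_1, …, j_b} ∪ {−j_1, …, −j_b}. -/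
open scoped BigOperators Pointwise
open MeasureTheory

noncomputable section

namespace NLS


/-- In `1d`, cubic resonances are confined to the initial frequencies `{± j_k}`. -/
theorem statement14 (b : ℕ) (j : Fin b → ℤ) (hj : Function.Injective j)
    (hj0 : ∀ k, j k ≠ 0) (n n' : Fin b → ℤ) (jv jv' : ℤ)
    (hcase :
      ((∑ m, n m * j m ^ 2) + jv ^ 2 = 0 ∧ (∑ m, n' m * j m ^ 2) + jv' ^ 2 = 0 ∧
        ∃ k k' : Fin b, j k ≠ j k' ∧
          n - n' = -Pi.single k 1 + Pi.single k' 1 ∧ jv - jv' = j k - j k') ∨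
      (-(∑ m, n m * j m ^ 2) + jv ^ 2 = 0 ∧ -(∑ m, n' m * j m ^ 2) + jv' ^ 2 = 0 ∧
        ∃ k k' : Fin b, j k ≠ j k' ∧
          n - n' = -Pi.single k 1 + Pi.single k' 1 ∧ jv - jv' = j k - j k') ∨
      ((∑ m, n m * j m ^ 2) + jv ^ 2 = 0 ∧ -(∑ m, n' m * j m ^ 2) + jv' ^ 2 = 0 ∧
        ∃ κ κ' : Fin b,
          n' - n = Pi.single κ 1 + Pi.single κ' 1 ∧ jv' - jv = -(j κ + j κ'))) :
    ∃ m : Fin b, jv = j m ∨ jv = -j m := by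
  have key : (∑ m, n m * j m ^ 2) - (∑ m, n' m * j m ^ 2) = ∑ m, (n - n') m * j m ^ 2 := by
    rw [← Finset.sum_sub_distrib]
    exact Finset.sum_congr rfl (fun m _ => by simp only [Pi.sub_apply]; ring)
  have hs : ∀ k : Fin b, ∑ m, (Pi.single k 1 : Fin b → ℤ) m * j m ^ 2 = j k ^ 2 := by
    intro k
    simp [Pi.single_apply]
  rcases hcase with ⟨h1, h2, k, k', hne, hn, hv⟩ | ⟨h1, h2, k, k', hne, hn, hv⟩ | ⟨h1, h2, k, k', hn, hv⟩
  · have e : ∑ m, (n - n') m * j m ^ 2 = - j k ^ 2 + j k' ^ 2 := by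
      rw [hn, ← hs k, ← hs k', ← Finset.sum_neg_distrib, ← Finset.sum_add_distrib]
      exact Finset.sum_congr rfl (fun m _ => by simp only [Pi.add_apply, Pi.neg_apply]; ring)
    refine ⟨k, Or.inl ?_⟩
    have h3 : (j k - j k') * (jv + jv') = (j k - j k') * (j k + j k') := by
      rw [← hv]; rw [e] at key
      linear_combination h1 - h2 - key - (j k + j k') * hv
    have := mul_left_cancel₀ (sub_ne_zero.2 hne) h3
    omega
  · have e : ∑ m, (n - n') m * j m ^ 2 = - j k ^ 2 + j k' ^ 2 := by
      rw [hn, ← hs k, ← hs k', ← Finset.sum_neg_distrib, ← Finset.sum_add_distrib]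
      exact Finset.sum_congr rfl (fun m _ => by simp only [Pi.add_apply, Pi.neg_apply]; ring)
    refine ⟨k', Or.inr ?_⟩
    have h3 : (j k - j k') * (jv + jv') = (j k - j k') * (-(j k + j k')) := by
      rw [← hv]; rw [e] at key
      linear_combination h1 - h2 + key + (j k + j k') * hv
    have := mul_left_cancel₀ (sub_ne_zero.2 hne) h3
    omega
  · have e : ∑ m, (n - n') m * j m ^ 2 = - (j k ^ 2 + j k' ^ 2) := by
      rw [← neg_sub n' n, hn, ← hs k, ← hs k', ← Finset.sum_add_distrib, ← Finset.sum_neg_distrib]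
      exact Finset.sum_congr rfl (fun m _ => by simp only [Pi.add_apply, Pi.neg_apply]; ring)
    rw [e] at key
    have hv' : jv' = jv - (j k + j k') := by omega
    subst hv'
    have h3 : (jv - j k) * (jv - j k') = 0 := by
      have : 2 * ((jv - j k) * (jv - j k')) = 0 := by
        linear_combination h1 + h2 - key
      omega
    rcases mul_eq_zero.1 h3 with h | h
    · exact ⟨k, Or.inl (by omega)⟩
    · exact ⟨k', Or.inl (by omega)⟩

end NLS
end
end
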